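/- There exists a continuous map f : [0,1] → [0,1] that has a period-2^i point for every integer i ≥ 0 but has no periodic point of any period that is not a power of 2. -/

import Mathlib

/-- `x` is a periodic point of `f` with least period `m`. -/
def PeriodPt (f : ℝ → ℝ) (m : ℕ) (x : ℝ) : Prop :=
  f^[m] x = x ∧ ∀ i : ℕ, 0 < i → i < m → f^[i] x ≠ x

open Function Set in
theorem exists_fixed_map : ∃ f : ℝ → ℝ, Continuous f ∧
    ∀ x, f x = max 0 (min 1 (2 - 3 * x)) * ((2 + max 0 (min 1 (f (min (3 * x) 1)))) / 3)
      + max 0 (min (x - 2 / 3) (1 / 3)) := by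
  let T : BoundedContinuousFunction ℝ ℝ → BoundedContinuousFunction ℝ ℝ := fun g =>
    BoundedContinuousFunction.ofNormedAddCommGroup
      (fun x => max 0 (min 1 (2 - 3 * x)) * ((2 + max 0 (min 1 (g (min (3 * x) 1)))) / 3)
        + max 0 (min (x - 2 / 3) (1 / 3)))
      (by fun_prop) 2 (by
        intro x
        have h1 : 0 ≤ max 0 (min 1 (2 - 3 * x)) := le_max_left _ _
        have h2 : max 0 (min 1 (2 - 3 * x)) ≤ 1 := by simp
        have h3 : 0 ≤ max 0 (min 1 (g (min (3 * x) 1))) := le_max_left _ _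
        have h4 : max 0 (min 1 (g (min (3 * x) 1))) ≤ 1 := by simp
        have h5 : 0 ≤ max 0 (min (x - 2 / 3) (1 / 3)) := le_max_left _ _
        have h6 : max 0 (min (x - 2 / 3) (1 / 3)) ≤ 1 / 3 := by
          apply max_le (by norm_num) (min_le_right _ _)
        rw [Real.norm_eq_abs, abs_le]
        constructor <;> nlinarith)
  have hT : ContractingWith (1/3) T := by
    refine ⟨by rw [← NNReal.coe_lt_coe]; norm_num, LipschitzWith.of_dist_le_mul fun g h => ?_⟩
    rw [BoundedContinuousFunction.dist_le (by positivity)]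
    intro x
    have hd := BoundedContinuousFunction.dist_coe_le_dist (f := g) (g := h) (min (3 * x) 1)
    have h1 : 0 ≤ max 0 (min 1 (2 - 3 * x)) := le_max_left _ _
    have h2 : max 0 (min 1 (2 - 3 * x)) ≤ 1 := by simp
    have h3 : |max 0 (min 1 (g (min (3 * x) 1))) - max 0 (min 1 (h (min (3 * x) 1)))|
        ≤ dist g h := by
      refine le_trans ?_ hd
      rw [Real.dist_eq]
      refine (abs_max_sub_max_le_max _ _ _ _).trans ?_
      simp only [sub_self, abs_zero]
      refine max_le (abs_nonneg _) ((abs_min_sub_min_le_max _ _ _ _).trans ?_)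
      simp
    simp only [T, BoundedContinuousFunction.coe_ofNormedAddCommGroup, Real.dist_eq]
    rw [show ((1/3 : NNReal) : ℝ) = 1/3 by norm_num]
    rw [abs_le] at h3 ⊢
    constructor <;> nlinarith
  obtain ⟨F, hF⟩ : ∃ F, T F = F := ⟨_, hT.fixedPoint_isFixedPt⟩
  refine ⟨F, F.continuous, fun x => ?_⟩
  conv_lhs => rw [← hF]
  rfl

theorem periodPt_iff (f : ℝ → ℝ) (m : ℕ) (hm : 0 < m) (x : ℝ) :
    PeriodPt f m x ↔ Function.minimalPeriod f x = m := by
  constructor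
  · rintro ⟨h1, h2⟩
    have hp : Function.IsPeriodicPt f m x := h1
    refine le_antisymm (hp.minimalPeriod_le hm) ?_
    by_contra hlt
    push Not at hlt
    exact h2 _ (hp.minimalPeriod_pos hm) hlt (Function.isPeriodicPt_minimalPeriod f x)
  · rintro rfl
    refine ⟨Function.isPeriodicPt_minimalPeriod f x, fun i hi hlt h => ?_⟩
    exact absurd (Function.IsPeriodicPt.minimalPeriod_le hi h) (not_le.2 hlt)

theorem periodPt_shift (f : ℝ → ℝ) (m : ℕ) (hm : 0 < m) (x : ℝ) (h : PeriodPt f m x) (j : ℕ) :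
    PeriodPt f m (f^[j] x) := by
  have hp : Function.IsPeriodicPt f m x := h.1
  rw [periodPt_iff f m hm] at h ⊢
  rw [Function.minimalPeriod_apply_iterate ⟨m, hm, hp⟩, h]

theorem sharkovsky_two_adic_tail :
    ∃ f : ℝ → ℝ, ContinuousOn f (Set.Icc 0 1) ∧
      Set.MapsTo f (Set.Icc 0 1) (Set.Icc 0 1) ∧
      (∀ i : ℕ, ∃ x ∈ Set.Icc (0:ℝ) 1, PeriodPt f (2 ^ i) x) ∧
      ∀ m : ℕ, 0 < m → (¬ ∃ i : ℕ, m = 2 ^ i) →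
        ¬ ∃ x ∈ Set.Icc (0:ℝ) 1, PeriodPt f m x := by
  obtain ⟨f, hc, hf⟩ := exists_fixed_map
  have hmap : Set.MapsTo f (Set.Icc 0 1) (Set.Icc 0 1) := by
    rintro x -
    rw [hf x]
    have h1 : 0 ≤ max 0 (min 1 (2 - 3 * x)) := le_max_left _ _
    have h2 : max 0 (min 1 (2 - 3 * x)) ≤ 1 := by simp
    have h3 : 0 ≤ max 0 (min 1 (f (min (3 * x) 1))) := le_max_left _ _
    have h4 : max 0 (min 1 (f (min (3 * x) 1))) ≤ 1 := by simp
    have h5 : 0 ≤ max 0 (min (x - 2 / 3) (1 / 3)) := le_max_left _ _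
    have h6 : max 0 (min (x - 2 / 3) (1 / 3)) ≤ 1 / 3 := by
      apply max_le (by norm_num) (min_le_right _ _)
    refine ⟨by positivity, ?_⟩
    rcases le_total x (2/3) with hx | hx
    · rw [max_eq_left (a := 0) (b := min (x - 2 / 3) (1 / 3))
        ((min_le_left _ _).trans (by linarith))]
      nlinarith
    · rw [max_eq_left (a := 0) (b := min 1 (2 - 3 * x))
        ((min_le_right _ _).trans (by linarith))]
      linarith
  have hcl : ∀ y ∈ Set.Icc (0:ℝ) 1, max 0 (min 1 (f y)) = f y := by
    intro y hy
    have := hmap hy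
    rw [min_eq_right this.2, max_eq_right this.1]
  have hL : ∀ y ∈ Set.Icc (0:ℝ) 1, f (y / 3) = 2 / 3 + f y / 3 := by
    intro y hy
    have e : 3 * (y / 3) = y := by ring
    rw [hf (y/3), e, min_eq_left hy.2, hcl y hy, min_eq_left (by linarith [hy.2]),
      max_eq_right (by norm_num), max_eq_left ((min_le_left _ _).trans (by linarith [hy.2]))]
    ring
  have hR : ∀ x ∈ Set.Icc (2/3:ℝ) 1, f x = x - 2 / 3 := by
    intro x hx
    rw [hf x, max_eq_left (a := 0) (b := min 1 (2 - 3 * x))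
        ((min_le_right _ _).trans (by linarith [hx.1])), min_eq_left (a := x - 2 / 3) (by linarith [hx.2]),
        max_eq_right (b := x - 2 / 3) (by linarith [hx.1])]
    ring
  have hM : ∀ x ∈ Set.Icc (1/3:ℝ) (2/3), f x = (2 - 3 * x) * (7 / 9) := by
    intro x hx
    have h1 : f 1 = 1 / 3 := by rw [hR 1 (by norm_num)]; norm_num
    rw [hf x, min_eq_right (a := 3 * x) (by linarith [hx.1]), hcl 1 (by norm_num), h1,
      max_eq_left (a := 0) (b := min (x - 2 / 3) (1 / 3))
        ((min_le_left _ _).trans (by linarith [hx.2])), min_eq_right (by linarith [hx.1]),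
        max_eq_right (by linarith [hx.2])]
    ring
  have hit : ∀ n : ℕ, ∀ y ∈ Set.Icc (0:ℝ) 1, f^[n] y ∈ Set.Icc (0:ℝ) 1 :=
    fun n y hy => hmap.iterate n hy
  have hsq : ∀ y ∈ Set.Icc (0:ℝ) 1, f (f (y / 3)) = f y / 3 := by
    intro y hy
    have := hmap hy
    rw [hL y hy, hR _ ⟨by linarith [this.1], by linarith [this.2]⟩]
    ring
  have hev : ∀ n : ℕ, ∀ y ∈ Set.Icc (0:ℝ) 1, f^[2 * n] (y / 3) = f^[n] y / 3 := by
    intro n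
    induction n with
    | zero => intro y _; simp
    | succ n ih =>
      intro y hy
      rw [show 2 * (n + 1) = 2 * n + 1 + 1 by ring, Function.iterate_succ_apply,
        Function.iterate_succ_apply, hsq y hy, ih _ (hmap hy), Function.iterate_succ_apply]
  have hodd : ∀ n : ℕ, ∀ y ∈ Set.Icc (0:ℝ) 1, f^[2 * n + 1] (y / 3) ≠ y / 3 := by
    intro n y hy h
    have h0 := hit n y hy
    have h1 := hmap h0
    rw [Function.iterate_succ_apply', hev n y hy, hL _ h0] at h
    linarith [hy.2, h1.1]
  have hdbl : ∀ k : ℕ, ∀ y ∈ Set.Icc (0:ℝ) 1,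
      (PeriodPt f (2 * k) (y / 3) ↔ PeriodPt f k y) := by
    intro k y hy
    constructor
    · rintro ⟨h1, h2⟩
      rw [hev k y hy] at h1
      refine ⟨by linarith, fun i hi hlt h => h2 (2 * i) (by omega) (by omega) ?_⟩
      rw [hev i y hy, h]
    · rintro ⟨h1, h2⟩
      refine ⟨by rw [hev k y hy, h1], fun i hi hlt h => ?_⟩
      rcases Nat.even_or_odd' i with ⟨j, rfl | rfl⟩
      · rw [hev j y hy] at h
        exact h2 j (by omega) (by omega) (by linarith)
      · exact hodd j y hy h
  refine ⟨f, hc.continuousOn, hmap, ?_, ?_⟩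
  · intro i
    induction i with
    | zero =>
      refine ⟨7/15, by norm_num, ?_, fun i h1 h2 => by simp at h2; omega⟩
      have := hM (7/15) (by norm_num)
      simp only [pow_zero, Function.iterate_one]
      rw [this]; norm_num
    | succ i ih =>
      obtain ⟨y, hy, hp⟩ := ih
      refine ⟨y / 3, ⟨by linarith [hy.1], by linarith [hy.1, hy.2]⟩, ?_⟩
      rw [pow_succ', hdbl _ y hy]
      exact hp
  · have key : ∀ m : ℕ, 0 < m → ∀ x ∈ Set.Icc (0:ℝ) 1, PeriodPt f m x → ∃ i : ℕ, m = 2 ^ i := by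
      intro m
      induction m using Nat.strong_induction_on with
      | _ m ih =>
      intro hm x hx hp
      have hleft : ∀ z ∈ Set.Icc (0:ℝ) (1/3), PeriodPt f m z → ∃ i : ℕ, m = 2 ^ i := by
        intro z hz hpz
        have hy : 3 * z ∈ Set.Icc (0:ℝ) 1 := ⟨by linarith [hz.1], by linarith [hz.2]⟩
        have e : z = (3 * z) / 3 := by ring
        rw [e] at hpz
        rcases Nat.even_or_odd' m with ⟨j, rfl | rfl⟩
        · rw [hdbl j _ hy] at hpz
          obtain ⟨i, hi⟩ := ih j (by omega) (by omega) _ hy hpz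
          exact ⟨i + 1, by rw [pow_succ', hi]⟩
        · exact absurd hpz.1 (hodd j _ hy)
      by_cases hall : ∀ j : ℕ, f^[j] x ∈ Set.Icc (1/3:ℝ) (2/3)
      · have hlin : ∀ j : ℕ, f^[j] x - 7 / 15 = (-(7/3)) ^ j * (x - 7 / 15) := by
          intro j
          induction j with
          | zero => simp
          | succ j ihj =>
            rw [Function.iterate_succ_apply', hM _ (hall j), pow_succ]
            linear_combination (-(7/3)) * ihj
        have hxp : x = 7 / 15 := by
          have h := hlin m
          rw [hp.1] at h
          by_contra hne
          have hne' : x - 7 / 15 ≠ 0 := sub_ne_zero.2 hne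
          have h1 : ((-(7/3) : ℝ)) ^ m = 1 := by
            apply mul_right_cancel₀ hne'
            rw [← h, one_mul]
          have h2 := congrArg abs h1
          rw [abs_pow, abs_one] at h2
          have h3 : (1:ℝ) < |(-(7/3) : ℝ)| ^ m :=
            one_lt_pow₀ (by rw [abs_neg, abs_of_pos] <;> norm_num) (by omega)
          linarith
        refine ⟨0, ?_⟩
        by_contra hm1
        refine hp.2 1 one_pos (by simp at hm1; omega) ?_
        rw [Function.iterate_one, hM x (hall 0), hxp]
        norm_num
      · push Not at hall
        obtain ⟨j, hj⟩ := hall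
        have hz := hit j x hx
        have hpj := periodPt_shift f m hm x hp j
        rcases lt_or_ge (f^[j] x) (1/3) with h | h
        · exact hleft _ ⟨hz.1, h.le⟩ hpj
        · have h' : 2/3 < f^[j] x := by
            by_contra hcon
            exact hj ⟨h, not_lt.1 hcon⟩
          refine hleft (f^[j+1] x) ?_ (periodPt_shift f m hm x hp (j+1))
          rw [Function.iterate_succ_apply', hR _ ⟨h'.le, hz.2⟩]
          exact ⟨by linarith, by linarith [hz.2]⟩
    rintro m hm hne ⟨x, hx, hp⟩
    exact hne (key m hm x hx hp)
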